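/- arXiv:2206.09568 — 2 statements merged into one kernel-verified Lean document; each statement's English description precedes it below -/
import Mathlib

section
/- Let (ρ, m, E, B) be a solution of the monolithic-regularized ideal MHD system on ℝ^d × (0,∞) with ρ > 0, twice continuously differentiable in space and continuously differentiable in time, with ∇·B = 0. Let S : ℝ² → ℝ be twice continuously differentiable with p·S_e(ρ,e) + ρ²·S_ρ(ρ,e) = 0 pointwise, and assume that along the solution S_e > 0, ∂_ρ(ρ² S_ρ) < 0, S_ee < 0, and ∂_ρ(ρ² S_ρ)·S_ee − ρ² S_ρe² > 0. Then s(x,t) := S(ρ(x,t), e(x,t)) satisfies the pointwise differential inequality ρ(∂_t s + u·∇s) − ∇·(ε ρ ∇s) − ε ∇ρ·∇s ≥ 0. -/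
open scoped BigOperators

/-- Spatial partial derivative `∂_i f (x)` of a scalar field on `ℝ^d`. -/
noncomputable def spd {d : ℕ} (f : (Fin d → ℝ) → ℝ) (i : Fin d) (x : Fin d → ℝ) : ℝ :=
  fderiv ℝ f x (Pi.single i 1)

/-- Laplacian `Δf(x) = ∑ᵢ ∂ᵢ∂ᵢ f (x)` of a scalar field on `ℝ^d`. -/
noncomputable def slap {d : ℕ} (f : (Fin d → ℝ) → ℝ) (x : Fin d → ℝ) : ℝ :=
  ∑ i, spd (spd f i) i x

/-- The Maxwell stress tensor `𝒯 = B ⊗ B − (|B|²/2) I` built from a vector `B ∈ ℝ^d`. -/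
noncomputable def maxwellT {d : ℕ} (B : Fin d → ℝ) (i j : Fin d) : ℝ :=
  B i * B j - (if i = j then (∑ k, (B k) ^ 2) / 2 else 0)

/-- Specific internal energy `e = (E − ρ|u|²/2 − |B|²/2)/ρ` with `u = m/ρ`,
as a space-time field. -/
noncomputable def specE {d : ℕ} (ρ E : (Fin d → ℝ) → ℝ → ℝ)
    (m B : (Fin d → ℝ) → ℝ → Fin d → ℝ) (x : Fin d → ℝ) (t : ℝ) : ℝ :=
  (E x t - ρ x t * (∑ i, (m x t i / ρ x t) ^ 2) / 2 - (∑ i, (B x t i) ^ 2) / 2) / ρ x t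

/-- Partial derivative of `S(ρ,e)` in the first argument `ρ`. -/
noncomputable def Sd1 (S : ℝ × ℝ → ℝ) (q : ℝ × ℝ) : ℝ := fderiv ℝ S q (1, 0)

/-- Partial derivative of `S(ρ,e)` in the second argument `e`. -/
noncomputable def Sd2 (S : ℝ × ℝ → ℝ) (q : ℝ × ℝ) : ℝ := fderiv ℝ S q (0, 1)

section helpers
variable {d : ℕ}

lemma spd_add' {f g : (Fin d → ℝ) → ℝ} (hf : Differentiable ℝ f) (hg : Differentiable ℝ g)
    (i : Fin d) (x : Fin d → ℝ) : spd (fun y => f y + g y) i x = spd f i x + spd g i x := by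
  unfold spd; rw [fderiv_fun_add (hf x) (hg x)]; simp

lemma spd_sub' {f g : (Fin d → ℝ) → ℝ} (hf : Differentiable ℝ f) (hg : Differentiable ℝ g)
    (i : Fin d) (x : Fin d → ℝ) : spd (fun y => f y - g y) i x = spd f i x - spd g i x := by
  unfold spd; rw [fderiv_fun_sub (hf x) (hg x)]; simp

lemma spd_mul' {f g : (Fin d → ℝ) → ℝ} (hf : Differentiable ℝ f) (hg : Differentiable ℝ g)
    (i : Fin d) (x : Fin d → ℝ) :
    spd (fun y => f y * g y) i x = spd f i x * g x + f x * spd g i x := by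
  unfold spd; rw [fderiv_fun_mul (hf x) (hg x)]; simp; ring

lemma spd_cmul' {f : (Fin d → ℝ) → ℝ} (hf : Differentiable ℝ f) (c : ℝ)
    (i : Fin d) (x : Fin d → ℝ) :
    spd (fun y => c * f y) i x = c * spd f i x := by
  unfold spd; rw [fderiv_const_mul (hf x)]; simp

lemma spd_sum' {ι : Type*} [Fintype ι] {f : ι → (Fin d → ℝ) → ℝ}
    (hf : ∀ k, Differentiable ℝ (f k))
    (i : Fin d) (x : Fin d → ℝ) : spd (fun y => ∑ k, f k y) i x = ∑ k, spd (f k) i x := by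
  unfold spd; rw [fderiv_fun_sum (fun k _ => hf k x)]; simp

lemma spd_ite' (P : Prop) [Decidable P] (f : (Fin d → ℝ) → ℝ)
    (i : Fin d) (x : Fin d → ℝ) :
    spd (fun y => if P then f y else 0) i x = if P then spd f i x else 0 := by
  split_ifs <;> simp [spd]

lemma spd_contDiff {f : (Fin d → ℝ) → ℝ} (hf : ContDiff ℝ 2 f) (i : Fin d) :
    ContDiff ℝ 1 (spd f i) := by
  unfold spd
  exact (hf.fderiv_right (m := 1) (by norm_num)).clm_apply contDiff_const

lemma spd_diff {f : (Fin d → ℝ) → ℝ} (hf : ContDiff ℝ 2 f) (i : Fin d) :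
    Differentiable ℝ (spd f i) := (spd_contDiff hf i).differentiable (by norm_num)

lemma cd2_diff {f : (Fin d → ℝ) → ℝ} (hf : ContDiff ℝ 2 f) :
    Differentiable ℝ f := hf.differentiable (by norm_num)

lemma slap_add' {f g : (Fin d → ℝ) → ℝ} (hf : ContDiff ℝ 2 f) (hg : ContDiff ℝ 2 g)
    (x : Fin d → ℝ) : slap (fun y => f y + g y) x = slap f x + slap g x := by
  unfold slap
  rw [← Finset.sum_add_distrib]
  refine Finset.sum_congr rfl fun i _ => ?_
  rw [show spd (fun y => f y + g y) i = fun y => spd f i y + spd g i y from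
    funext fun y => spd_add' (cd2_diff hf) (cd2_diff hg) i y]
  exact spd_add' (spd_diff hf i) (spd_diff hg i) i x

lemma slap_sum' {ι : Type*} [Fintype ι] {f : ι → (Fin d → ℝ) → ℝ}
    (hf : ∀ k, ContDiff ℝ 2 (f k))
    (x : Fin d → ℝ) : slap (fun y => ∑ k, f k y) x = ∑ k, slap (f k) x := by
  unfold slap
  rw [Finset.sum_comm]
  refine Finset.sum_congr rfl fun i _ => ?_
  rw [show spd (fun y => ∑ k, f k y) i = fun y => ∑ k, spd (f k) i y from
    funext fun y => spd_sum' (fun k => cd2_diff (hf k)) i y]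
  exact spd_sum' (fun k => spd_diff (hf k) i) i x

lemma slap_mul' {f g : (Fin d → ℝ) → ℝ} (hf : ContDiff ℝ 2 f) (hg : ContDiff ℝ 2 g)
    (x : Fin d → ℝ) : slap (fun y => f y * g y) x
      = slap f x * g x + 2 * (∑ j, spd f j x * spd g j x) + f x * slap g x := by
  unfold slap
  rw [Finset.sum_mul, Finset.mul_sum, Finset.mul_sum, ← Finset.sum_add_distrib,
    ← Finset.sum_add_distrib]
  refine Finset.sum_congr rfl fun i _ => ?_
  have hf1 := cd2_diff hf
  have hg1 := cd2_diff hg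
  have hf2 := spd_diff hf i
  have hg2 := spd_diff hg i
  rw [show spd (fun y => f y * g y) i = fun y => spd f i y * g y + f y * spd g i y from
    funext fun y => spd_mul' hf1 hg1 i y]
  rw [spd_add' (hf2.fun_mul hg1) (hf1.fun_mul hg2), spd_mul' hf2 hg1, spd_mul' hf1 hg2]
  ring

lemma slap_cmul' {f : (Fin d → ℝ) → ℝ} (hf : ContDiff ℝ 2 f) (c : ℝ)
    (x : Fin d → ℝ) : slap (fun y => c * f y) x = c * slap f x := by
  unfold slap
  rw [Finset.mul_sum]
  refine Finset.sum_congr rfl fun i _ => ?_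
  rw [show spd (fun y => c * f y) i = fun y => c * spd f i y from
    funext fun y => spd_cmul' (cd2_diff hf) c i y]
  exact spd_cmul' (spd_diff hf i) c i x

lemma clm_pair (L : ℝ × ℝ →L[ℝ] ℝ) (a b : ℝ) : L (a, b) = L (1, 0) * a + L (0, 1) * b := by
  have : ((a, b) : ℝ × ℝ) = a • ((1, 0) : ℝ × ℝ) + b • ((0, 1) : ℝ × ℝ) := by
    ext <;> simp
  rw [this, map_add, map_smul, map_smul]; simp; ring

lemma spd_comp' {S : ℝ × ℝ → ℝ} (hS : Differentiable ℝ S) {f g : (Fin d → ℝ) → ℝ}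
    (hf : Differentiable ℝ f) (hg : Differentiable ℝ g) (i : Fin d) (x : Fin d → ℝ) :
    spd (fun y => S (f y, g y)) i x
      = Sd1 S (f x, g x) * spd f i x + Sd2 S (f x, g x) * spd g i x := by
  have h := (hS (f x, g x)).hasFDerivAt.comp x ((hf x).hasFDerivAt.prodMk (hg x).hasFDerivAt)
  have h' : fderiv ℝ (fun y => S (f y, g y)) x = _ := h.fderiv
  unfold spd Sd1 Sd2
  rw [h']
  simp only [ContinuousLinearMap.comp_apply, ContinuousLinearMap.prod_apply]
  exact clm_pair _ _ _

lemma deriv_comp' {S : ℝ × ℝ → ℝ} (hS : Differentiable ℝ S) {f g : ℝ → ℝ} (t : ℝ)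
    (hf : DifferentiableAt ℝ f t) (hg : DifferentiableAt ℝ g t) :
    deriv (fun y => S (f y, g y)) t
      = Sd1 S (f t, g t) * deriv f t + Sd2 S (f t, g t) * deriv g t := by
  have h := (hS (f t, g t)).hasFDerivAt.comp_hasDerivAt t (hf.hasDerivAt.prodMk hg.hasDerivAt)
  have h' : deriv (fun y => S (f y, g y)) t = _ := h.deriv
  unfold Sd1 Sd2
  rw [h']
  exact clm_pair _ _ _

lemma Sd1_cd {S : ℝ × ℝ → ℝ} (hS : ContDiff ℝ 2 S) : Differentiable ℝ (Sd1 S) := by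
  have : ContDiff ℝ 1 (Sd1 S) := by
    unfold Sd1
    exact (hS.fderiv_right (m := 1) (by norm_num)).clm_apply contDiff_const
  exact this.differentiable (by norm_num)

lemma Sd2_cd {S : ℝ × ℝ → ℝ} (hS : ContDiff ℝ 2 S) : Differentiable ℝ (Sd2 S) := by
  have : ContDiff ℝ 1 (Sd2 S) := by
    unfold Sd2
    exact (hS.fderiv_right (m := 1) (by norm_num)).clm_apply contDiff_const
  exact this.differentiable (by norm_num)

lemma Sd_symm {S : ℝ × ℝ → ℝ} (hS : ContDiff ℝ 2 S) (q : ℝ × ℝ) :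
    Sd1 (Sd2 S) q = Sd2 (Sd1 S) q := by
  have hd : Differentiable ℝ (fderiv ℝ S) :=
    (hS.fderiv_right (m := 1) (by norm_num)).differentiable (by norm_num)
  have hsym : IsSymmSndFDerivAt ℝ S q :=
    (hS.contDiffAt).isSymmSndFDerivAt (by simp)
  have key : ∀ v w : ℝ × ℝ, fderiv ℝ (fun q => fderiv ℝ S q v) q w
      = fderiv ℝ (fderiv ℝ S) q w v := by
    intro v w
    rw [fderiv_clm_apply (hd q) (differentiableAt_const v)]
    simp
  change fderiv ℝ (fun q => fderiv ℝ S q (0,1)) q (1,0)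
    = fderiv ℝ (fun q => fderiv ℝ S q (1,0)) q (0,1)
  rw [key, key]
  exact hsym _ _

/-- algebraic derivation of the internal energy balance. -/
lemma internal_energy (ε R Rt e et P LR Le : ℝ) (Rx ex Px U b Ut bt LU Lb : Fin d → ℝ)
    (Ux bx : Fin d → Fin d → ℝ)
    (hdiv : ∑ j, bx j j = 0)
    (hmass : Rt + ∑ j, (Rx j * U j + R * Ux j j) = ε * LR)
    (hmom : ∀ i, (Rt * U i + R * Ut i)
      + (∑ j, ((Rx j * U i + R * Ux i j) * U j + R * U i * Ux j j
          - (bx i j * b j + b i * bx j j)) + Px i + ∑ k, b k * bx k i)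
      = ε * (LR * U i + 2 * (∑ j, Rx j * Ux i j) + R * LU i))
    (hind : ∀ i, bt i + ∑ j, (Ux j j * b i + U j * bx i j - (bx j j * U i + b j * Ux i j))
      = ε * Lb i)
    (hen : (Rt * e + R * et + (Rt * (∑ k, U k * U k) / 2 + R * ∑ k, U k * Ut k)
        + ∑ k, b k * bt k)
      + ∑ j, (Ux j j * (R * e + R * (∑ k, U k * U k) / 2 + ∑ k, b k * b k + P)
          + U j * (Rx j * e + R * ex j + (Rx j * (∑ k, U k * U k) / 2 + R * ∑ k, U k * Ux k j)
            + 2 * (∑ k, b k * bx k j) + Px j)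
          - ((∑ k, (Ux k j * b k + U k * bx k j)) * b j + (∑ k, U k * b k) * bx j j))
      = ε * (LR * e + 2 * (∑ j, Rx j * ex j) + R * Le
          + (LR * (∑ k, U k * U k) / 2 + 2 * (∑ j, Rx j * ∑ k, U k * Ux k j)
            + R * ∑ k, (U k * LU k + ∑ j, Ux k j ^ 2))
          + ∑ k, (b k * Lb k + ∑ j, bx k j ^ 2))) :
    R * (et + ∑ j, U j * ex j) + P * ∑ j, Ux j j
      = ε * (R * Le + 2 * (∑ j, Rx j * ex j) + R * (∑ k, ∑ j, Ux k j ^ 2)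
        + ∑ k, ∑ j, bx k j ^ 2) := by
  have hm : Rt + ∑ j, Rx j * U j + R * ∑ j, Ux j j = ε * LR := by
    rw [← hmass, Finset.sum_add_distrib, Finset.mul_sum]; ring
  have hmo : ∀ i, R * Ut i + R * (∑ j, U j * Ux i j) - (∑ j, b j * bx i j) + Px i
      + ∑ k, b k * bx k i = ε * (2 * (∑ j, Rx j * Ux i j) + R * LU i) := by
    intro i
    have e1 : ∑ j, ((Rx j * U i + R * Ux i j) * U j + R * U i * Ux j j
          - (bx i j * b j + b i * bx j j))
        = U i * (∑ j, Rx j * U j) + R * (∑ j, U j * Ux i j) + R * U i * (∑ j, Ux j j)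
          - (∑ j, b j * bx i j) - b i * ∑ j, bx j j := by
      simp only [Finset.mul_sum, ← Finset.sum_add_distrib, ← Finset.sum_sub_distrib]
      exact Finset.sum_congr rfl fun j _ => by ring
    have h := hmom i
    rw [e1, hdiv] at h
    linear_combination h - U i * hm
  have hin : ∀ i, bt i + (∑ j, Ux j j) * b i + (∑ j, U j * bx i j) - (∑ j, b j * Ux i j)
      = ε * Lb i := by
    intro i
    have e1 : ∑ j, (Ux j j * b i + U j * bx i j - (bx j j * U i + b j * Ux i j))
      = (∑ j, Ux j j) * b i + (∑ j, U j * bx i j) - (∑ j, b j * Ux i j)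
        - (∑ j, bx j j) * U i := by
      simp only [Finset.sum_mul, ← Finset.sum_add_distrib, ← Finset.sum_sub_distrib]
      exact Finset.sum_congr rfl fun j _ => by ring
    have h := hind i
    rw [e1, hdiv] at h
    linear_combination h
  -- dot products
  have hmoU : R * (∑ k, U k * Ut k) + R * (∑ i, ∑ j, U i * (U j * Ux i j))
      - (∑ i, ∑ j, U i * (b j * bx i j)) + (∑ i, U i * Px i) + (∑ i, ∑ k, U i * (b k * bx k i))
      = ε * (2 * (∑ i, ∑ j, U i * (Rx j * Ux i j)) + R * ∑ i, U i * LU i) := by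
    have h : ∑ i, U i * (R * Ut i + R * (∑ j, U j * Ux i j) - (∑ j, b j * bx i j) + Px i
      + ∑ k, b k * bx k i) = ∑ i, U i * (ε * (2 * (∑ j, Rx j * Ux i j) + R * LU i)) :=
      Finset.sum_congr rfl fun i _ => by rw [hmo i]
    simp only [← Finset.mul_sum]
    have l : ∑ i, U i * (R * Ut i + R * (∑ j, U j * Ux i j) - (∑ j, b j * bx i j) + Px i
      + ∑ k, b k * bx k i) = R * (∑ k, U k * Ut k) + R * (∑ i, U i * ∑ j, (U j * Ux i j))
      - (∑ i, U i * ∑ j, (b j * bx i j)) + (∑ i, U i * Px i)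
      + (∑ i, U i * ∑ k, (b k * bx k i)) := by
      rw [Finset.mul_sum, Finset.mul_sum]
      simp only [← Finset.sum_add_distrib, ← Finset.sum_sub_distrib]
      exact Finset.sum_congr rfl fun j _ => by ring
    have r : ∑ i, U i * (ε * (2 * (∑ j, Rx j * Ux i j) + R * LU i))
        = ε * (2 * (∑ i, U i * ∑ j, (Rx j * Ux i j)) + R * ∑ i, U i * LU i) := by
      rw [Finset.mul_sum, Finset.mul_sum, ← Finset.sum_add_distrib, Finset.mul_sum]
      exact Finset.sum_congr rfl fun j _ => by ring
    rw [← l, ← r, h]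
  have hinb : (∑ k, b k * bt k) + (∑ j, Ux j j) * (∑ k, b k * b k)
      + (∑ i, ∑ j, b i * (U j * bx i j)) - (∑ i, ∑ j, b i * (b j * Ux i j))
      = ε * ∑ i, b i * Lb i := by
    have h : ∑ i, b i * (bt i + (∑ j, Ux j j) * b i + (∑ j, U j * bx i j)
      - (∑ j, b j * Ux i j)) = ∑ i, b i * (ε * Lb i) :=
      Finset.sum_congr rfl fun i _ => by rw [hin i]
    simp only [← Finset.mul_sum]
    have l : ∑ i, b i * (bt i + (∑ j, Ux j j) * b i + (∑ j, U j * bx i j)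
      - (∑ j, b j * Ux i j)) = (∑ k, b k * bt k) + (∑ j, Ux j j) * (∑ k, b k * b k)
      + (∑ i, b i * ∑ j, (U j * bx i j)) - (∑ i, b i * ∑ j, (b j * Ux i j)) := by
      rw [Finset.mul_sum]
      simp only [← Finset.sum_add_distrib, ← Finset.sum_sub_distrib]
      exact Finset.sum_congr rfl fun j _ => by ring
    rw [← l, h, Finset.mul_sum]
    exact Finset.sum_congr rfl fun j _ => by ring
  have hflux : ∑ j, (Ux j j * (R * e + R * (∑ k, U k * U k) / 2 + ∑ k, b k * b k + P)
          + U j * (Rx j * e + R * ex j + (Rx j * (∑ k, U k * U k) / 2 + R * ∑ k, U k * Ux k j)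
            + 2 * (∑ k, b k * bx k j) + Px j)
          - ((∑ k, (Ux k j * b k + U k * bx k j)) * b j + (∑ k, U k * b k) * bx j j))
      = (∑ j, Ux j j) * (R * e + R * (∑ k, U k * U k) / 2 + ∑ k, b k * b k + P)
        + (e + (∑ k, U k * U k) / 2) * (∑ j, Rx j * U j) + R * (∑ j, U j * ex j)
        + R * (∑ j, ∑ k, U j * (U k * Ux k j)) + 2 * (∑ j, ∑ k, U j * (b k * bx k j))
        + (∑ j, U j * Px j) - (∑ j, ∑ k, b j * (b k * Ux k j))
        - (∑ j, ∑ k, b j * (U k * bx k j)) - (∑ k, U k * b k) * (∑ j, bx j j) := by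
    simp only [← Finset.mul_sum]
    rw [Finset.sum_mul]
    simp only [Finset.mul_sum (s := Finset.univ) (f := fun j => Rx j * U j),
      Finset.mul_sum (s := Finset.univ) (f := fun j => U j * ex j),
      Finset.mul_sum (s := Finset.univ) (f := fun j => bx j j),
      Finset.mul_sum (s := Finset.univ) (f := fun j => U j * ∑ k, U k * Ux k j),
      Finset.mul_sum (s := Finset.univ) (f := fun j => U j * ∑ k, b k * bx k j)]
    simp only [← Finset.sum_add_distrib, ← Finset.sum_sub_distrib]
    refine Finset.sum_congr rfl fun j _ => ?_
    have : ∑ k, (Ux k j * b k + U k * bx k j) = (∑ k, b k * Ux k j) + ∑ k, U k * bx k j := by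
      rw [← Finset.sum_add_distrib]
      exact Finset.sum_congr rfl fun j _ => by ring
    rw [this]; ring
  have c1 : ∑ j, ∑ k, U j * (U k * Ux k j) = ∑ i, ∑ j, U i * (U j * Ux i j) := by
    rw [Finset.sum_comm]
    exact Finset.sum_congr rfl fun i _ => Finset.sum_congr rfl fun j _ => by ring
  have c2 : ∑ j, ∑ k, b j * (b k * Ux k j) = ∑ i, ∑ j, b i * (b j * Ux i j) := by
    rw [Finset.sum_comm]
    exact Finset.sum_congr rfl fun i _ => Finset.sum_congr rfl fun j _ => by ring
  have c3 : ∑ j, ∑ k, b j * (U k * bx k j) = ∑ i, ∑ j, U i * (b j * bx i j) := by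
    rw [Finset.sum_comm]
    exact Finset.sum_congr rfl fun i _ => Finset.sum_congr rfl fun j _ => by ring
  have c4 : ∑ j, ∑ k, U j * (b k * bx k j) = ∑ i, ∑ j, b i * (U j * bx i j) := by
    rw [Finset.sum_comm]
    exact Finset.sum_congr rfl fun i _ => Finset.sum_congr rfl fun j _ => by ring
  have c5 : ∑ j, Rx j * ∑ k, U k * Ux k j = ∑ i, ∑ j, U i * (Rx j * Ux i j) := by
    simp only [Finset.mul_sum]
    rw [Finset.sum_comm]
    exact Finset.sum_congr rfl fun i _ => Finset.sum_congr rfl fun j _ => by ring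
  rw [hflux, hdiv, c1, c2, c3, c4, c5, Finset.sum_add_distrib, Finset.sum_add_distrib] at hen
  rw [c4] at hmoU
  linear_combination hen - hmoU - hinb - (e + (∑ k, U k * U k) / 2) * hm

lemma quad_neg {a b c r g : ℝ} (ha : a < 0) (h : a * c - b ^ 2 > 0) :
    a * r ^ 2 + 2 * b * r * g + c * g ^ 2 ≤ 0 := by
  have : 0 ≤ a * (a * r ^ 2 + 2 * b * r * g + c * g ^ 2) := by
    nlinarith [sq_nonneg (a * r + b * g), mul_nonneg h.le (sq_nonneg g)]
  by_contra hc
  push Not at hc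
  nlinarith [mul_neg_of_neg_of_pos ha hc]

/-- final algebraic step. -/
lemma entropy_alg (ε R Rt e et P LR Le s1 s2 s11 s12 s22 : ℝ) (Rx ex U : Fin d → ℝ)
    (D G1 G2 : ℝ) (hε : 0 < ε) (hR : 0 < R) (hG1 : 0 ≤ G1) (hG2 : 0 ≤ G2)
    (heos : P * s2 + R ^ 2 * s1 = 0) (hs2 : 0 < s2)
    (h1 : R ^ 2 * s11 + 2 * R * s1 < 0)
    (h3 : (R ^ 2 * s11 + 2 * R * s1) * s22 - R ^ 2 * s12 ^ 2 > 0)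
    (hm : Rt + ∑ j, U j * Rx j + R * D = ε * LR)
    (hen : R * (et + ∑ j, U j * ex j) + P * D
      = ε * (R * Le + 2 * (∑ j, Rx j * ex j) + R * G1 + G2)) :
    R * ((s1 * Rt + s2 * et) + ∑ i, U i * (s1 * Rx i + s2 * ex i))
      - (ε * (∑ j, Rx j * (s1 * Rx j + s2 * ex j)) + ε * R * (s1 * LR + s2 * Le
        + ∑ j, (s11 * Rx j ^ 2 + 2 * s12 * Rx j * ex j + s22 * ex j ^ 2)))
      - ε * (∑ j, Rx j * (s1 * Rx j + s2 * ex j)) ≥ 0 := by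
  have a1 : ∑ i, U i * (s1 * Rx i + s2 * ex i)
      = s1 * (∑ i, U i * Rx i) + s2 * ∑ i, U i * ex i := by
    rw [Finset.mul_sum, Finset.mul_sum, ← Finset.sum_add_distrib]
    exact Finset.sum_congr rfl fun i _ => by ring
  have a2 : ∑ i, Rx i * (s1 * Rx i + s2 * ex i)
      = s1 * (∑ i, Rx i ^ 2) + s2 * ∑ i, Rx i * ex i := by
    rw [Finset.mul_sum, Finset.mul_sum, ← Finset.sum_add_distrib]
    exact Finset.sum_congr rfl fun i _ => by ring
  have a3 : ∑ j, (s11 * Rx j ^ 2 + 2 * s12 * Rx j * ex j + s22 * ex j ^ 2)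
      = s11 * (∑ i, Rx i ^ 2) + 2 * s12 * (∑ i, Rx i * ex i) + s22 * ∑ i, ex i ^ 2 := by
    rw [Finset.mul_sum, Finset.mul_sum, Finset.mul_sum, ← Finset.sum_add_distrib,
      ← Finset.sum_add_distrib]
    exact Finset.sum_congr rfl fun i _ => by ring
  have hq : (R ^ 2 * s11 + 2 * R * s1) * (∑ i, Rx i ^ 2)
      + 2 * R ^ 2 * s12 * (∑ i, Rx i * ex i) + R ^ 2 * s22 * (∑ i, ex i ^ 2) ≤ 0 := by
    rw [Finset.mul_sum, Finset.mul_sum, Finset.mul_sum, ← Finset.sum_add_distrib,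
      ← Finset.sum_add_distrib]
    refine Finset.sum_nonpos fun i _ => ?_
    have := quad_neg (r := Rx i) (g := R * ex i) (b := R * s12) (c := s22) h1
      (by rw [mul_pow]; exact h3)
    nlinarith [this]
  rw [a1, a2, a3]
  set r2 := ∑ i, Rx i ^ 2
  set re := ∑ i, Rx i * ex i
  set e2 := ∑ i, ex i ^ 2
  have hq' : R * s11 * r2 + 2 * s1 * r2 + 2 * R * s12 * re + R * s22 * e2 ≤ 0 := by
    by_contra hc
    push Not at hc
    nlinarith [mul_pos hR hc]
  have hpos : 0 ≤ ε * (s2 * (R * G1 + G2)) := by positivity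
  have hneg := mul_nonneg hε.le (neg_nonneg.mpr hq')
  have key : R * ((s1 * Rt + s2 * et) + (s1 * (∑ i, U i * Rx i) + s2 * ∑ i, U i * ex i))
      - (ε * (s1 * r2 + s2 * re) + ε * R * (s1 * LR + s2 * Le
        + (s11 * r2 + 2 * s12 * re + s22 * e2)))
      - ε * (s1 * r2 + s2 * re)
      = ε * (s2 * (R * G1 + G2))
        + ε * -(R * s11 * r2 + 2 * s1 * r2 + 2 * R * s12 * re + R * s22 * e2) := by
    linear_combination R * s1 * hm + s2 * hen - D * heos
  rw [key]; linarith

lemma half_cd {v : Fin d → (Fin d → ℝ) → ℝ} (hv : ∀ k, ContDiff ℝ 2 (v k)) :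
    ContDiff ℝ 2 (fun y => (1/2) * ∑ k, v k y * v k y) :=
  contDiff_const.mul (ContDiff.sum fun k _ => (hv k).mul (hv k))

lemma half_spd {v : Fin d → (Fin d → ℝ) → ℝ} (hv : ∀ k, ContDiff ℝ 2 (v k)) (j : Fin d)
    (x : Fin d → ℝ) :
    spd (fun y => (1/2) * ∑ k, v k y * v k y) j x = ∑ k, v k x * spd (v k) j x := by
  have hd := fun k => cd2_diff (hv k)
  rw [spd_cmul' (Differentiable.fun_sum fun k _ => (hd k).fun_mul (hd k)),
    spd_sum' fun k => (hd k).fun_mul (hd k), Finset.mul_sum]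
  refine Finset.sum_congr rfl fun k _ => ?_
  rw [spd_mul' (hd k) (hd k)]; ring

lemma half_slap {v : Fin d → (Fin d → ℝ) → ℝ} (hv : ∀ k, ContDiff ℝ 2 (v k))
    (x : Fin d → ℝ) :
    slap (fun y => (1/2) * ∑ k, v k y * v k y) x
      = ∑ k, (v k x * slap (v k) x + ∑ j, spd (v k) j x ^ 2) := by
  rw [slap_cmul' (ContDiff.sum fun k _ => (hv k).mul (hv k)),
    slap_sum' fun k => (hv k).mul (hv k), Finset.mul_sum]
  refine Finset.sum_congr rfl fun k _ => ?_
  rw [slap_mul' (hv k) (hv k)]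
  simp only [sq]; ring

lemma half_deriv {v : Fin d → ℝ → ℝ} (t : ℝ) (hv : ∀ k, DifferentiableAt ℝ (v k) t) :
    HasDerivAt (fun τ => (1/2) * ∑ k, v k τ * v k τ) (∑ k, v k t * deriv (v k) t) t := by
  have h := (HasDerivAt.fun_sum (u := Finset.univ)
    fun k _ => (hv k).hasDerivAt.mul (hv k).hasDerivAt).const_mul (1/2 : ℝ)
  refine h.congr_deriv ?_
  rw [Finset.mul_sum]
  exact Finset.sum_congr rfl fun k _ => by ring

lemma slap_comp {S : ℝ × ℝ → ℝ} (hS : ContDiff ℝ 2 S) {f g : (Fin d → ℝ) → ℝ}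
    (hf : ContDiff ℝ 2 f) (hg : ContDiff ℝ 2 g) (x : Fin d → ℝ) :
    slap (fun y => S (f y, g y)) x
      = Sd1 S (f x, g x) * slap f x + Sd2 S (f x, g x) * slap g x
        + ∑ j, (Sd1 (Sd1 S) (f x, g x) * spd f j x ^ 2
          + 2 * Sd2 (Sd1 S) (f x, g x) * spd f j x * spd g j x
          + Sd2 (Sd2 S) (f x, g x) * spd g j x ^ 2) := by
  unfold slap
  rw [Finset.mul_sum, Finset.mul_sum, ← Finset.sum_add_distrib, ← Finset.sum_add_distrib]
  refine Finset.sum_congr rfl fun i _ => ?_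
  have hf1 := cd2_diff hf
  have hg1 := cd2_diff hg
  have hf2 := spd_diff hf i
  have hg2 := spd_diff hg i
  have hS1 := Sd1_cd hS
  have hS2 := Sd2_cd hS
  have c1 : Differentiable ℝ (fun y => Sd1 S (f y, g y)) := hS1.comp (hf1.prodMk hg1)
  have c2 : Differentiable ℝ (fun y => Sd2 S (f y, g y)) := hS2.comp (hf1.prodMk hg1)
  rw [show spd (fun y => S (f y, g y)) i
    = fun y => Sd1 S (f y, g y) * spd f i y + Sd2 S (f y, g y) * spd g i y from
    funext fun y => spd_comp' (hS.differentiable (by norm_num)) hf1 hg1 i y]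
  rw [spd_add' (c1.fun_mul hf2) (c2.fun_mul hg2), spd_mul' c1 hf2, spd_mul' c2 hg2,
    spd_comp' hS1 hf1 hg1, spd_comp' hS2 hf1 hg1, Sd_symm hS]
  ring
end helpers

/-- for smooth positive-density solutions of the monolithic-regularized ideal
MHD system with `∇·B = 0`, equation of state `p S_e + ρ² S_ρ = 0`, positive temperature
`S_e > 0` and strict convexity of `−S` in `(ρ⁻¹,e)` along the solution, the entropy field
`s = S(ρ,e)` satisfies `ρ(∂ₜs + u·∇s) − ∇·(ερ∇s) − ε∇ρ·∇s ≥ 0` pointwise. -/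
theorem stmt_9 {d : ℕ} (hd : 1 ≤ d) (ε : ℝ) (hε : 0 < ε)
    (ρ E p : (Fin d → ℝ) → ℝ → ℝ) (m B : (Fin d → ℝ) → ℝ → Fin d → ℝ)
    (S : ℝ × ℝ → ℝ) (hS : ContDiff ℝ 2 S)
    (hρpos : ∀ x t, 0 < ρ x t)
    (hρx : ∀ t, ContDiff ℝ 2 fun x => ρ x t) (hρt : ∀ x, ContDiff ℝ 1 fun t => ρ x t)
    (hmx : ∀ t i, ContDiff ℝ 2 fun x => m x t i) (hmt : ∀ x i, ContDiff ℝ 1 fun t => m x t i)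
    (hEx : ∀ t, ContDiff ℝ 2 fun x => E x t) (hEt : ∀ x, ContDiff ℝ 1 fun t => E x t)
    (hBx : ∀ t i, ContDiff ℝ 2 fun x => B x t i) (hBt : ∀ x i, ContDiff ℝ 1 fun t => B x t i)
    (hpx : ∀ t, ContDiff ℝ 1 fun x => p x t)
    (heos : ∀ (x : Fin d → ℝ) (t : ℝ), 0 < t →
      p x t * Sd2 S (ρ x t, specE ρ E m B x t)
        + (ρ x t) ^ 2 * Sd1 S (ρ x t, specE ρ E m B x t) = 0)
    (hSe : ∀ (x : Fin d → ℝ) (t : ℝ), 0 < t →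
      0 < Sd2 S (ρ x t, specE ρ E m B x t))
    (hconv1 : ∀ (x : Fin d → ℝ) (t : ℝ), 0 < t →
      (ρ x t) ^ 2 * Sd1 (Sd1 S) (ρ x t, specE ρ E m B x t)
        + 2 * ρ x t * Sd1 S (ρ x t, specE ρ E m B x t) < 0)
    (hconv2 : ∀ (x : Fin d → ℝ) (t : ℝ), 0 < t →
      Sd2 (Sd2 S) (ρ x t, specE ρ E m B x t) < 0)
    (hconv3 : ∀ (x : Fin d → ℝ) (t : ℝ), 0 < t →
      ((ρ x t) ^ 2 * Sd1 (Sd1 S) (ρ x t, specE ρ E m B x t)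
            + 2 * ρ x t * Sd1 S (ρ x t, specE ρ E m B x t))
          * Sd2 (Sd2 S) (ρ x t, specE ρ E m B x t)
        - (ρ x t) ^ 2 * (Sd2 (Sd1 S) (ρ x t, specE ρ E m B x t)) ^ 2 > 0)
    (hdivB : ∀ (x : Fin d → ℝ) (t : ℝ), 0 < t → (∑ j, spd (fun y => B y t j) j x) = 0)
    (hmass : ∀ (x : Fin d → ℝ) (t : ℝ), 0 < t →
      deriv (fun τ => ρ x τ) t + (∑ j, spd (fun y => m y t j) j x)
        = ε * slap (fun y => ρ y t) x)
    (hmom : ∀ (x : Fin d → ℝ) (t : ℝ), 0 < t → ∀ i,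
      deriv (fun τ => m x τ i) t
        + (∑ j, spd (fun y => m y t i * (m y t j / ρ y t)
            + (if i = j then p y t else 0) - maxwellT (B y t) i j) j x)
        = ε * slap (fun y => m y t i) x)
    (hener : ∀ (x : Fin d → ℝ) (t : ℝ), 0 < t →
      deriv (fun τ => E x τ) t
        + (∑ j, spd (fun y => (m y t j / ρ y t) * (E y t + p y t)
            - ∑ k, (m y t k / ρ y t) * maxwellT (B y t) k j) j x)
        = ε * slap (fun y => E y t) x)
    (hind : ∀ (x : Fin d → ℝ) (t : ℝ), 0 < t → ∀ i,
      deriv (fun τ => B x τ i) t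
        + (∑ j, spd (fun y => (m y t j / ρ y t) * B y t i - B y t j * (m y t i / ρ y t)) j x)
        = ε * slap (fun y => B y t i) x) :
    ∀ (x : Fin d → ℝ) (t : ℝ), 0 < t →
      ρ x t * (deriv (fun τ => S (ρ x τ, specE ρ E m B x τ)) t
          + ∑ i, (m x t i / ρ x t) * spd (fun y => S (ρ y t, specE ρ E m B y t)) i x)
        - (∑ j, spd (fun y => ε * ρ y t * spd (fun z => S (ρ z t, specE ρ E m B z t)) j y) j x)
        - ε * (∑ j, spd (fun y => ρ y t) j x
            * spd (fun y => S (ρ y t, specE ρ E m B y t)) j x) ≥ 0 := by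
  intro x t ht
  have hne : ∀ y τ, ρ y τ ≠ 0 := fun y τ => (hρpos y τ).ne'
  -- fields
  obtain ⟨R, hRdef⟩ : ∃ R : (Fin d → ℝ) → ℝ, R = fun y => ρ y t := ⟨_, rfl⟩
  obtain ⟨U, hUdef⟩ : ∃ U : Fin d → (Fin d → ℝ) → ℝ, U = fun i y => m y t i / ρ y t := ⟨_, rfl⟩
  obtain ⟨b, hbdef⟩ : ∃ b : Fin d → (Fin d → ℝ) → ℝ, b = fun i y => B y t i := ⟨_, rfl⟩
  obtain ⟨P, hPdef⟩ : ∃ P : (Fin d → ℝ) → ℝ, P = fun y => p y t := ⟨_, rfl⟩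
  obtain ⟨e, hedef⟩ : ∃ e : (Fin d → ℝ) → ℝ, e = fun y => specE ρ E m B y t := ⟨_, rfl⟩
  have hR2 : ContDiff ℝ 2 R := by rw [hRdef]; exact hρx t
  have hU2 : ∀ i, ContDiff ℝ 2 (U i) := by
    intro i; rw [hUdef]; exact (hmx t i).div (hρx t) fun y => hne y t
  have hb2 : ∀ i, ContDiff ℝ 2 (b i) := by intro i; rw [hbdef]; exact hBx t i
  have hP1 : Differentiable ℝ P := by rw [hPdef]; exact (hpx t).differentiable (by norm_num)
  have he2 : ContDiff ℝ 2 e := by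
    rw [hedef]; unfold specE
    refine ContDiff.div ?_ (hρx t) fun y => hne y t
    refine ((hEx t).sub (((hρx t).mul (ContDiff.sum fun i _ => ?_)).div_const 2)).sub
      ((ContDiff.sum fun i _ => (hBx t i).pow 2).div_const 2)
    exact (((hmx t i).div (hρx t) fun y => hne y t)).pow 2
  have hR1 := cd2_diff hR2
  have hU1 := fun i => cd2_diff (hU2 i)
  have hb1 := fun i => cd2_diff (hb2 i)
  have he1 := cd2_diff he2
  -- time derivatives
  have hRt : DifferentiableAt ℝ (fun τ => ρ x τ) t := (hρt x).differentiable (by norm_num) t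
  have hUt : ∀ i, DifferentiableAt ℝ (fun τ => m x τ i / ρ x τ) t := fun i =>
    ((hmt x i).differentiable (by norm_num) t).div hRt (hne x t)
  have hbt : ∀ i, DifferentiableAt ℝ (fun τ => B x τ i) t := fun i =>
    (hBt x i).differentiable (by norm_num) t
  have het : DifferentiableAt ℝ (fun τ => specE ρ E m B x τ) t := by
    unfold specE
    refine DifferentiableAt.div ?_ hRt (hne x t)
    refine (((hEt x).differentiable (by norm_num) t).sub
      ((hRt.mul (DifferentiableAt.fun_sum fun i _ => ?_)).div_const 2)).sub
      ((DifferentiableAt.fun_sum fun i _ => (hbt i).pow 2).div_const 2)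
    exact (hUt i).pow 2
  have hmU : ∀ y τ i, m y τ i = ρ y τ * (m y τ i / ρ y τ) := fun y τ i => by
    rw [mul_div_cancel₀ _ (hne y τ)]
  have hEe : ∀ y τ, E y τ = ρ y τ * specE ρ E m B y τ
      + ρ y τ * ((1/2) * ∑ i, (m y τ i / ρ y τ) * (m y τ i / ρ y τ))
      + (1/2) * ∑ i, B y τ i * B y τ i := fun y τ => by
    unfold specE
    rw [mul_div_cancel₀ _ (hne y τ)]
    simp only [sq]; ring
  have hmf : ∀ i, (fun y => m y t i) = fun y => R y * U i y := by
    intro i; subst hRdef hUdef; funext y; exact hmU y t i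
  have hEf : (fun y => E y t) = fun y => R y * e y + R y * ((1/2) * ∑ i, U i y * U i y)
      + (1/2) * ∑ i, b i y * b i y := by
    subst hRdef hUdef hbdef hedef; funext y; exact hEe y t
  have dm : ∀ i, deriv (fun τ => m x τ i) t = deriv (fun τ => ρ x τ) t * U i x
      + R x * deriv (fun τ => m x τ i / ρ x τ) t := by
    intro i
    rw [show (fun τ => m x τ i) = fun τ => ρ x τ * (m x τ i / ρ x τ) from
      funext fun τ => hmU x τ i]
    subst hRdef hUdef
    exact (hRt.hasDerivAt.mul (hUt i).hasDerivAt).deriv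
  have dE : deriv (fun τ => E x τ) t = deriv (fun τ => ρ x τ) t * e x
      + R x * deriv (fun τ => specE ρ E m B x τ) t
      + (deriv (fun τ => ρ x τ) t * (∑ k, U k x * U k x) / 2
        + R x * ∑ k, U k x * deriv (fun τ => m x τ k / ρ x τ) t)
      + ∑ k, b k x * deriv (fun τ => B x τ k) t := by
    rw [show (fun τ => E x τ) = _ from funext fun τ => hEe x τ]
    have h := ((hRt.hasDerivAt.mul het.hasDerivAt).add
      (hRt.hasDerivAt.mul (half_deriv t hUt))).add (half_deriv t hbt)
    subst hRdef hUdef hbdef hedef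
    refine (h.congr_deriv ?_).deriv
    ring
  -- the equations
  have hdiv : ∑ j, spd (b j) j x = 0 := by subst hbdef; exact hdivB x t ht
  have emass : deriv (fun τ => ρ x τ) t
      + ∑ j, (spd R j x * U j x + R x * spd (U j) j x) = ε * slap R x := by
    have h := hmass x t ht
    simp only [hmf] at h
    rw [← hRdef] at h
    rw [← h]
    congr 1
    exact Finset.sum_congr rfl fun j _ => (spd_mul' hR1 (hU1 j) j x).symm
  have hTf : ∀ i j, (fun y => m y t i * (m y t j / ρ y t)
            + (if i = j then p y t else 0) - maxwellT (B y t) i j)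
      = fun y => ((R y * U i y) * U j y - b i y * b j y)
        + (if i = j then (P y + (1/2) * ∑ k, b k y * b k y) else 0) := by
    intro i j
    funext y
    have := congrFun (hmf i) y
    beta_reduce at this
    rw [this]
    subst hUdef hbdef hPdef
    unfold maxwellT
    simp only [sq]
    split_ifs <;> ring
  have emom : ∀ i, (deriv (fun τ => ρ x τ) t * U i x
        + R x * deriv (fun τ => m x τ i / ρ x τ) t)
      + (∑ j, ((spd R j x * U i x + R x * spd (U i) j x) * U j x + R x * U i x * spd (U j) j x
          - (spd (b i) j x * b j x + b i x * spd (b j) j x)) + spd P i x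
          + ∑ k, b k x * spd (b k) i x)
      = ε * (slap R x * U i x + 2 * (∑ j, spd R j x * spd (U i) j x) + R x * slap (U i) x) := by
    intro i
    have h := hmom x t ht i
    rw [dm i] at h
    simp only [hTf] at h
    rw [hmf i, slap_mul' hR2 (hU2 i)] at h
    rw [← h, add_assoc (∑ j, _)]
    congr 1
    have hN1 := cd2_diff (half_cd hb2)
    have hPN : Differentiable ℝ (fun y => P y + (1/2) * ∑ k, b k y * b k y) := hP1.add hN1
    have : ∀ j, spd (fun y => ((R y * U i y) * U j y - b i y * b j y)
        + (if i = j then (P y + (1/2) * ∑ k, b k y * b k y) else 0)) j x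
        = ((spd R j x * U i x + R x * spd (U i) j x) * U j x + R x * U i x * spd (U j) j x
          - (spd (b i) j x * b j x + b i x * spd (b j) j x))
          + if i = j then (spd P j x + ∑ k, b k x * spd (b k) j x) else 0 := by
      intro j
      have hite : Differentiable ℝ
          (fun y => if i = j then (P y + (1/2) * ∑ k, b k y * b k y) else 0) := by
        split_ifs
        · exact hPN
        · exact differentiable_const _
      have q1 : Differentiable ℝ (fun y => (R y * U i y) * U j y) :=
        (hR1.fun_mul (hU1 i)).mul (hU1 j)
      have q2 : Differentiable ℝ (fun y => b i y * b j y) := (hb1 i).mul (hb1 j)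
      rw [spd_add' (q1.fun_sub q2) hite, spd_sub' q1 q2, spd_mul' (hR1.fun_mul (hU1 i)) (hU1 j),
        spd_mul' hR1 (hU1 i), spd_mul' (hb1 i) (hb1 j), spd_ite', spd_add' hP1 hN1,
        half_spd hb2]
    simp only [this, Finset.sum_add_distrib (s := Finset.univ)
      (g := fun j => if i = j then (spd P j x + ∑ k, b k x * spd (b k) j x) else 0)]
    rw [Finset.sum_ite_eq]
    simp
  have eind : ∀ i, deriv (fun τ => B x τ i) t
      + ∑ j, (spd (U j) j x * b i x + U j x * spd (b i) j x
        - (spd (b j) j x * U i x + b j x * spd (U i) j x)) = ε * slap (b i) x := by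
    intro i
    have h := hind x t ht i
    have hf : ∀ j, (fun y => (m y t j / ρ y t) * B y t i - B y t j * (m y t i / ρ y t))
        = fun y => U j y * b i y - b j y * U i y := by
      intro j; subst hUdef hbdef; rfl
    simp only [hf] at h
    rw [show (fun y => B y t i) = b i by subst hbdef; rfl] at h
    rw [← h]
    congr 1
    refine Finset.sum_congr rfl fun j _ => ?_
    rw [spd_sub' ((hU1 j).fun_mul (hb1 i)) ((hb1 j).fun_mul (hU1 i)), spd_mul' (hU1 j) (hb1 i),
      spd_mul' (hb1 j) (hU1 i)]
  have hFf : ∀ j, (fun y => (m y t j / ρ y t) * (E y t + p y t)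
            - ∑ k, (m y t k / ρ y t) * maxwellT (B y t) k j)
      = fun y => U j y * ((R y * e y + R y * ((1/2) * ∑ i, U i y * U i y))
          + ((1/2) * ∑ i, b i y * b i y + (1/2) * ∑ i, b i y * b i y) + P y)
          - (∑ k, U k y * b k y) * b j y := by
    intro j
    funext y
    have h1 := congrFun hEf y
    beta_reduce at h1
    have h2 : ∑ k, (m y t k / ρ y t) * maxwellT (B y t) k j
        = (∑ k, U k y * b k y) * b j y - U j y * ((1/2) * ∑ i, b i y * b i y) := by
      subst hUdef hbdef
      unfold maxwellT
      simp only [mul_sub, Finset.sum_sub_distrib, mul_ite, mul_zero, Finset.sum_ite_eq',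
        Finset.mem_univ, if_true, sq, Finset.sum_mul]
      congr 1
      · exact Finset.sum_congr rfl fun k _ => by ring
      · ring
    rw [h2, h1]
    subst hUdef hPdef
    ring
  have een := hener x t ht
  have hQ2 := half_cd hU2
  have hN2 := half_cd hb2
  have hQ1 := cd2_diff hQ2
  have hN1 := cd2_diff hN2
  have hFx : ∀ j, spd (fun y => U j y * ((R y * e y + R y * ((1/2) * ∑ i, U i y * U i y))
          + ((1/2) * ∑ i, b i y * b i y + (1/2) * ∑ i, b i y * b i y) + P y)
          - (∑ k, U k y * b k y) * b j y) j x
      = spd (U j) j x * (R x * e x + R x * (∑ k, U k x * U k x) / 2 + ∑ k, b k x * b k x + P x)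
          + U j x * (spd R j x * e x + R x * spd e j x
            + (spd R j x * (∑ k, U k x * U k x) / 2 + R x * ∑ k, U k x * spd (U k) j x)
            + 2 * (∑ k, b k x * spd (b k) j x) + spd P j x)
          - ((∑ k, (spd (U k) j x * b k x + U k x * spd (b k) j x)) * b j x
            + (∑ k, U k x * b k x) * spd (b j) j x) := by
    intro j
    have q1 : Differentiable ℝ (fun y => R y * e y) := hR1.mul he1
    have q2 : Differentiable ℝ (fun y => R y * ((1/2) * ∑ i, U i y * U i y)) := hR1.mul hQ1
    have q3 : Differentiable ℝ
      (fun y => (1/2) * ∑ i, b i y * b i y + (1/2) * ∑ i, b i y * b i y) := hN1.add hN1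
    have q4 : Differentiable ℝ (fun y => ∑ k, U k y * b k y) :=
      Differentiable.fun_sum fun k _ => (hU1 k).fun_mul (hb1 k)
    have q5 : Differentiable ℝ (fun y => R y * e y + R y * ((1/2) * ∑ i, U i y * U i y)) :=
      q1.add q2
    have q6 : Differentiable ℝ (fun y => (R y * e y + R y * ((1/2) * ∑ i, U i y * U i y))
          + ((1/2) * ∑ i, b i y * b i y + (1/2) * ∑ i, b i y * b i y)) := q5.add q3
    have q7 : Differentiable ℝ (fun y => (R y * e y + R y * ((1/2) * ∑ i, U i y * U i y))
          + ((1/2) * ∑ i, b i y * b i y + (1/2) * ∑ i, b i y * b i y) + P y) := q6.add hP1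
    rw [spd_sub' ((hU1 j).fun_mul q7) (q4.fun_mul (hb1 j)), spd_mul' (hU1 j) q7, spd_mul' q4 (hb1 j),
      spd_add' q6 hP1, spd_add' q5 q3, spd_add' q1 q2, spd_add' hN1 hN1, spd_mul' hR1 he1,
      spd_mul' hR1 hQ1, half_spd hU2, half_spd hb2, spd_sum' fun k => (hU1 k).fun_mul (hb1 k)]
    simp only [fun k => spd_mul' (hU1 k) (hb1 k) j x]
    ring
  have hEl : slap (fun y => E y t) x = slap R x * e x + 2 * (∑ j, spd R j x * spd e j x)
      + R x * slap e x
      + (slap R x * (∑ k, U k x * U k x) / 2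
        + 2 * (∑ j, spd R j x * ∑ k, U k x * spd (U k) j x)
        + R x * ∑ k, (U k x * slap (U k) x + ∑ j, spd (U k) j x ^ 2))
      + ∑ k, (b k x * slap (b k) x + ∑ j, spd (b k) j x ^ 2) := by
    rw [hEf, slap_add' ((hR2.mul he2).add (hR2.mul hQ2)) hN2,
      slap_add' (hR2.mul he2) (hR2.mul hQ2), slap_mul' hR2 he2, slap_mul' hR2 hQ2,
      half_slap hU2, half_slap hb2]
    simp only [half_spd hU2]
    ring
  rw [dE, hEl] at een
  simp only [hFf, hFx] at een
  have hint := internal_energy ε (R x) (deriv (fun τ => ρ x τ) t) (e x)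
    (deriv (fun τ => specE ρ E m B x τ) t) (P x) (slap R x) (slap e x)
    (fun j => spd R j x) (fun j => spd e j x) (fun j => spd P j x) (fun j => U j x)
    (fun j => b j x) (fun j => deriv (fun τ => m x τ j / ρ x τ) t)
    (fun j => deriv (fun τ => B x τ j) t) (fun j => slap (U j) x) (fun j => slap (b j) x)
    (fun i j => spd (U i) j x) (fun i j => spd (b i) j x) hdiv emass emom eind een
  have hm' : deriv (fun τ => ρ x τ) t + ∑ j, U j x * spd R j x + R x * ∑ j, spd (U j) j x
      = ε * slap R x := by
    rw [← emass, Finset.sum_add_distrib, Finset.mul_sum, add_assoc]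
    congr 2
    exact Finset.sum_congr rfl fun j _ => by ring
  have hS1 : Differentiable ℝ S := hS.differentiable (by norm_num)
  have hRx : 0 < R x := by subst hRdef; exact hρpos x t
  have fin := entropy_alg ε (R x) (deriv (fun τ => ρ x τ) t) (e x)
    (deriv (fun τ => specE ρ E m B x τ) t) (P x) (slap R x) (slap e x)
    (Sd1 S (R x, e x)) (Sd2 S (R x, e x)) (Sd1 (Sd1 S) (R x, e x)) (Sd2 (Sd1 S) (R x, e x))
    (Sd2 (Sd2 S) (R x, e x))
    (fun j => spd R j x) (fun j => spd e j x) (fun j => U j x)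
    (∑ j, spd (U j) j x) (∑ k, ∑ j, spd (U k) j x ^ 2) (∑ k, ∑ j, spd (b k) j x ^ 2)
    hε hRx (Finset.sum_nonneg fun k _ => Finset.sum_nonneg fun j _ => sq_nonneg _)
    (Finset.sum_nonneg fun k _ => Finset.sum_nonneg fun j _ => sq_nonneg _)
    (by subst hRdef hedef hPdef; exact heos x t ht)
    (by subst hRdef hedef; exact hSe x t ht)
    (by subst hRdef hedef; exact hconv1 x t ht)
    (by subst hRdef hedef; exact hconv3 x t ht) hm' hint
  have g1 : deriv (fun τ => S (ρ x τ, specE ρ E m B x τ)) t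
      = Sd1 S (R x, e x) * deriv (fun τ => ρ x τ) t
        + Sd2 S (R x, e x) * deriv (fun τ => specE ρ E m B x τ) t := by
    subst hRdef hedef; exact deriv_comp' hS1 t hRt het
  have g0 : (fun y => S (ρ y t, specE ρ E m B y t)) = fun y => S (R y, e y) := by
    subst hRdef hedef; rfl
  have hs2 : ContDiff ℝ 2 (fun y => S (R y, e y)) := hS.comp (hR2.prodMk he2)
  have g2 : ∑ j, spd (fun y => ε * ρ y t * spd (fun z => S (R z, e z)) j y) j x
      = ε * (∑ j, spd R j x * spd (fun y => S (R y, e y)) j x)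
        + ε * R x * slap (fun y => S (R y, e y)) x := by
    unfold slap
    rw [Finset.mul_sum, Finset.mul_sum, ← Finset.sum_add_distrib]
    refine Finset.sum_congr rfl fun j _ => ?_
    rw [show (fun y => ε * ρ y t * spd (fun z => S (R z, e z)) j y)
      = fun y => ε * (R y * spd (fun z => S (R z, e z)) j y) by
        subst hRdef; funext y; ring]
    rw [spd_cmul' (hR1.fun_mul (spd_diff hs2 j)), spd_mul' hR1 (spd_diff hs2 j)]
    ring
  rw [g0, g1, g2, slap_comp hS hR2 he2]
  simp only [fun j => spd_comp' hS1 hR1 he1 j x]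
  have g3 : ρ x t = R x := by subst hRdef; rfl
  have g4 : ∀ i, m x t i / R x = U i x := by intro i; subst hRdef hUdef; rfl
  rw [g3, ← hRdef]
  simp only [g4]
  exact fin
end

section
/- Let γ > 1 and let (ρ, m, E, B) be a solution of the monolithic-regularized ideal MHD system on ℝ^d × (0,∞), twice continuously differentiable in space and continuously differentiable in time, with ∇·B = 0, ρ > 0 and e > 0, where u := m/ρ, e := (E − ρ|u|²/2 − |B|²/2)/ρ, and the ideal-gas pressure p = (γ−1)ρe. Let f : ℝ → ℝ be twice continuously differentiable with f' > 0 and f' − γ f'' > 0 everywhere, and set s := ln e − (γ−1) ln ρ. Then the generalized entropy inequality ∂_t(ρ f(s)) + ∇·(u ρ f(s) − ε ρ ∇f(s) − ε f(s) ∇ρ) ≥ 0 holds at every point. -/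
open scoped BigOperators

/-- Ideal-gas specific entropy field `s = ln e − (γ−1) ln ρ`. -/
noncomputable def sField (γ : ℝ) {d : ℕ} (ρ E : (Fin d → ℝ) → ℝ → ℝ)
    (m B : (Fin d → ℝ) → ℝ → Fin d → ℝ) (x : Fin d → ℝ) (t : ℝ) : ℝ :=
  Real.log (specE ρ E m B x t) - (γ - 1) * Real.log (ρ x t)

/-- `g` is differentiable at `x`, with derivative `a` in direction `v`. -/
def HD {V : Type*} [NormedAddCommGroup V] [NormedSpace ℝ V] (g : V → ℝ) (x v : V) (a : ℝ) : Prop :=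
  DifferentiableAt ℝ g x ∧ fderiv ℝ g x v = a

section rules
variable {V : Type*} [NormedAddCommGroup V] [NormedSpace ℝ V] {g h : V → ℝ} {x v : V} {a b : ℝ}

theorem HD.cast (hg : HD g x v a) (h : a = b) : HD g x v b := h ▸ hg

theorem HD.of (hg : DifferentiableAt ℝ g x) : HD g x v (fderiv ℝ g x v) := ⟨hg, rfl⟩

theorem HD.const (c : ℝ) : HD (fun _ : V => c) x v 0 := ⟨by fun_prop, by simp⟩

theorem HD.add (hg : HD g x v a) (hh : HD h x v b) : HD (fun y => g y + h y) x v (a + b) :=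
  ⟨hg.1.add hh.1, by rw [fderiv_fun_add hg.1 hh.1]; simp [hg.2, hh.2]⟩

theorem HD.sub (hg : HD g x v a) (hh : HD h x v b) : HD (fun y => g y - h y) x v (a - b) :=
  ⟨hg.1.sub hh.1, by rw [fderiv_fun_sub hg.1 hh.1]; simp [hg.2, hh.2]⟩

theorem HD.mul (hg : HD g x v a) (hh : HD h x v b) :
    HD (fun y => g y * h y) x v (a * h x + g x * b) :=
  ⟨hg.1.mul hh.1, by rw [fderiv_fun_mul hg.1 hh.1]; simp [hg.2, hh.2]; ring⟩

theorem HD.comp {φ : ℝ → ℝ} {c : ℝ} (hφ : HasDerivAt φ c (g x)) (hg : HD g x v a) :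
    HD (fun y => φ (g y)) x v (c * a) := by
  have := hφ.comp_hasFDerivAt x hg.1.hasFDerivAt
  refine ⟨this.differentiableAt, ?_⟩
  have h2 : fderiv ℝ (fun y => φ (g y)) x = c • fderiv ℝ g x := this.fderiv
  rw [h2]; simp [hg.2]

theorem HD.sum {d : ℕ} {g : Fin d → V → ℝ} {a : Fin d → ℝ} (hg : ∀ i, HD (g i) x v (a i)) :
    HD (fun y => ∑ i, g i y) x v (∑ i, a i) := by
  refine ⟨DifferentiableAt.fun_sum fun i _ => (hg i).1, ?_⟩
  rw [fderiv_fun_sum fun i _ => (hg i).1]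
  simp [fun i => (hg i).2]

theorem HD.div (hg : HD g x v a) (hh : HD h x v b) (h0 : h x ≠ 0) :
    HD (fun y => g y / h y) x v ((a - g x / h x * b) / h x) := by
  have := hg.mul (HD.comp (hasDerivAt_inv h0) hh)
  simp only [div_eq_mul_inv]
  refine this.cast ?_
  field_simp
  ring

theorem HD.sq (hg : HD g x v a) : HD (fun y => (g y) ^ 2) x v (2 * g x * a) := by
  have := hg.mul hg
  simp only [pow_two]
  exact this.cast (by ring)

theorem HD.half (hg : HD g x v a) : HD (fun y => g y / 2) x v (a / 2) := by
  have := hg.mul (HD.const (1/2 : ℝ))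
  have e : (fun y => g y / 2) = fun y => g y * (1/2) := by funext y; ring
  rw [e]
  exact this.cast (by ring)

theorem HD.log (hg : HD g x v a) (h0 : g x ≠ 0) : HD (fun y => Real.log (g y)) x v (a / g x) :=
  (HD.comp (Real.hasDerivAt_log h0) hg).cast (by field_simp)

variable {d : ℕ} {ρ E : V → ℝ} {m B : V → Fin d → ℝ} {r e : ℝ} {μ b' : Fin d → ℝ}

theorem HD.q (hr : HD ρ x v r) (he : HD E x v e) (hm : ∀ i, HD (fun y => m y i) x v (μ i))
    (hB : ∀ i, HD (fun y => B y i) x v (b' i)) (h0 : ρ x ≠ 0) :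
    HD (fun y => E y - ρ y * (∑ i, (m y i / ρ y) ^ 2) / 2 - (∑ i, (B y i) ^ 2) / 2) x v
      (e - ∑ i, m x i / ρ x * μ i + (∑ i, (m x i / ρ x) ^ 2) / 2 * r - ∑ i, B x i * b' i) := by
  have := (he.sub ((hr.mul (HD.sum fun i => ((hm i).div hr h0).sq)).half)).sub
    (HD.sum fun i => (hB i).sq).half
  refine this.cast ?_
  have e1 : ρ x * ∑ i, 2 * (m x i / ρ x) * ((μ i - m x i / ρ x * r) / ρ x)
      = 2 * ∑ i, m x i / ρ x * μ i - 2 * r * ∑ i, (m x i / ρ x) ^ 2 := by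
    simp only [Finset.mul_sum, ← Finset.sum_sub_distrib]
    refine Finset.sum_congr rfl fun i _ => ?_
    field_simp
  have e2 : ∑ i, 2 * B x i * b' i = 2 * ∑ i, B x i * b' i := by
    simp only [Finset.mul_sum]
    exact Finset.sum_congr rfl fun i _ => by ring
  rw [e1, e2]; ring

theorem HD.q2 {r1 e1 : V → ℝ} {m1 B1 : V → Fin d → ℝ} {r2 e2 : ℝ} {m2 B2 : Fin d → ℝ}
    (hr : HD ρ x v (r1 x)) (hm : ∀ i, HD (fun y => m y i) x v (m1 x i))
    (hB : ∀ i, HD (fun y => B y i) x v (B1 x i)) (h0 : ρ x ≠ 0)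
    (hr1 : HD r1 x v r2) (he1 : HD e1 x v e2) (hm1 : ∀ i, HD (fun y => m1 y i) x v (m2 i))
    (hB1 : ∀ i, HD (fun y => B1 y i) x v (B2 i)) :
    HD (fun y => e1 y - ∑ i, m y i / ρ y * m1 y i + (∑ i, (m y i / ρ y) ^ 2) / 2 * r1 y
        - ∑ i, B y i * B1 y i) x v
      (e2 - ∑ i, m x i / ρ x * m2 i + (∑ i, (m x i / ρ x) ^ 2) / 2 * r2 - ∑ i, B x i * B2 i
        - ρ x * (∑ i, ((m1 x i - m x i / ρ x * r1 x) / ρ x) ^ 2) - ∑ i, (B1 x i) ^ 2) := by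
  have := ((he1.sub (HD.sum fun i => ((hm i).div hr h0).mul (hm1 i))).add
    ((HD.sum fun i => ((hm i).div hr h0).sq).half.mul hr1)).sub
    (HD.sum fun i => (hB i).mul (hB1 i))
  refine this.cast ?_
  simp only [Finset.sum_add_distrib]
  have e3 : ρ x * (∑ i, ((m1 x i - m x i / ρ x * r1 x) / ρ x) ^ 2)
     = (∑ i, (m1 x i - m x i / ρ x * r1 x) / ρ x * m1 x i)
       - (∑ i, 2 * (m x i / ρ x) * ((m1 x i - m x i / ρ x * r1 x) / ρ x)) / 2 * r1 x := by
    rw [Finset.mul_sum, Finset.sum_div, Finset.sum_mul, ← Finset.sum_sub_distrib]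
    refine Finset.sum_congr rfl fun i _ => ?_
    field_simp
  have e4 : ∑ i, (B1 x i) ^ 2 = ∑ i, B1 x i * B1 x i :=
    Finset.sum_congr rfl fun i _ => by ring
  rw [e3, e4]; ring

theorem HD.s {q : V → ℝ} {γ q1 : ℝ} (hr : HD ρ x v r) (hq : HD q x v q1) (h0 : ρ x ≠ 0)
    (hq0 : q x ≠ 0) :
    HD (fun y => Real.log (q y) - γ * Real.log (ρ y)) x v (q1 / q x - γ * (r / ρ x)) :=
  ((hq.log hq0).sub ((HD.const γ).mul (hr.log h0))).cast (by ring)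

end rules

/-- The algebra of the fluxes in one direction `j`. -/
theorem alg_flux {d : ℕ} (ρ r E e q q1 p p1 : ℝ) (u w B b μ G IF MF : Fin d → ℝ) (j : Fin d)
    (hμ : ∀ k, μ k = ρ * w k + u k * r)
    (hE : E = q + ρ * (∑ k, u k ^ 2) / 2 + (∑ k, B k ^ 2) / 2)
    (hq : q1 = e - ∑ i, u i * μ i + (∑ i, u i ^ 2) / 2 * r - ∑ i, B i * b i)
    (hMF : ∀ k, MF k = μ k * u j + ρ * u k * w j + (if k = j then p1 else 0) - G k)
    (hIF : ∀ k, IF k = (w j * B k + u j * b k) - (b j * u k + B j * w k)) :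
    (w j * (E + p) + u j * (e + p1) - ∑ k, (w k * maxwellT B k j + u k * G k))
      - ∑ k, u k * MF k + (∑ k, u k ^ 2) / 2 * μ j - ∑ k, B k * IF k
      = u j * q1 + (q + p) * w j + (∑ k, u k * B k) * b j := by
  have h1 : ∑ k, (w k * maxwellT B k j + u k * G k)
      = B j * (∑ k, w k * B k) - w j * (∑ k, B k ^ 2) / 2 + ∑ k, u k * G k := by
    rw [Finset.sum_add_distrib]
    congr 1
    simp only [maxwellT, mul_sub, Finset.sum_sub_distrib, mul_ite, mul_zero]
    simp [Finset.mul_sum]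
    congr 1
    · exact Finset.sum_congr rfl fun i _ => by ring
    · rw [← Finset.mul_sum]; ring
  have h2 : ∑ k, u k * MF k = u j * (∑ k, u k * μ k) + ρ * w j * (∑ k, u k ^ 2) + u j * p1
      - ∑ k, u k * G k := by
    simp only [hMF, mul_sub, mul_add, Finset.sum_sub_distrib, Finset.sum_add_distrib, mul_ite,
      mul_zero]
    simp [Finset.mul_sum]
    congr 1 
    · exact Finset.sum_congr rfl fun i _ => by ring
    · exact Finset.sum_congr rfl fun i _ => by ring
  have h3 : ∑ k, B k * IF k = w j * (∑ k, B k ^ 2) + u j * (∑ k, B k * b k)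
      - (∑ k, u k * B k) * b j - B j * (∑ k, w k * B k) := by
    simp only [hIF, Finset.mul_sum, Finset.sum_mul, ← Finset.sum_sub_distrib,
      ← Finset.sum_add_distrib]
    exact Finset.sum_congr rfl fun i _ => by ring
  rw [h1, h2, h3, hq, hE, hμ j]
  ring

/-- Nonpositivity of the Hessian. -/
theorem hess_nonneg (γ f1 f2 X Y : ℝ) (hγ : 1 < γ) (h1 : 0 < f1) (h2 : 0 < f1 - γ * f2) :
    0 ≤ f1 * (Y ^ 2 - 2 * X * Y + γ * X ^ 2) - f2 * (Y - γ * X) ^ 2 := by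
  have : γ * (f1 * (Y ^ 2 - 2 * X * Y + γ * X ^ 2) - f2 * (Y - γ * X) ^ 2)
      = (f1 - γ * f2) * (Y - γ * X) ^ 2 + f1 * (γ - 1) * Y ^ 2 := by ring
  have h3 : 0 ≤ γ * (f1 * (Y ^ 2 - 2 * X * Y + γ * X ^ 2) - f2 * (Y - γ * X) ^ 2) := by
    rw [this]
    have : 0 < γ - 1 := by linarith
    positivity
  exact nonneg_of_mul_nonneg_right h3 (by linarith)

theorem alg_final {d : ℕ} (γ ε ρ q rt qt f0 f1 f2 D : ℝ) (u w r r2 q1 q2 : Fin d → ℝ)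
    (hγ : 1 < γ) (hε : 0 < ε) (hρ : 0 < ρ) (hq : 0 < q) (hf1 : 0 < f1)
    (hf2 : 0 < f1 - γ * f2) (hD : 0 ≤ D)
    (hrt : rt = ε * (∑ j, r2 j) - ∑ j, (ρ * w j + u j * r j))
    (hqt : qt = ε * (∑ j, q2 j) + ε * D - ∑ j, (u j * q1 j + (q + (γ - 1) * q) * w j)) :
    0 ≤ (rt * f0 + ρ * (f1 * (qt / q - γ * (rt / ρ))))
      + ∑ j, ((w j * (ρ * f0) + u j * (r j * f0 + ρ * (f1 * (q1 j / q - γ * (r j / ρ)))))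
        - ε * (r j * (f1 * (q1 j / q - γ * (r j / ρ)))
          + ρ * (f2 * (q1 j / q - γ * (r j / ρ)) * (q1 j / q - γ * (r j / ρ))
            + f1 * ((q2 j - q1 j / q * q1 j) / q - γ * ((r2 j - r j / ρ * r j) / ρ))))
        - ε * ((f1 * (q1 j / q - γ * (r j / ρ))) * r j + f0 * r2 j)) := by
  have key : (rt * f0 + ρ * (f1 * (qt / q - γ * (rt / ρ))))
      + ∑ j, ((w j * (ρ * f0) + u j * (r j * f0 + ρ * (f1 * (q1 j / q - γ * (r j / ρ)))))
        - ε * (r j * (f1 * (q1 j / q - γ * (r j / ρ)))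
          + ρ * (f2 * (q1 j / q - γ * (r j / ρ)) * (q1 j / q - γ * (r j / ρ))
            + f1 * ((q2 j - q1 j / q * q1 j) / q - γ * ((r2 j - r j / ρ * r j) / ρ))))
        - ε * ((f1 * (q1 j / q - γ * (r j / ρ))) * r j + f0 * r2 j))
      = ε * (ρ * f1 / q * D) + ε * ρ * ∑ j, (f1 * ((q1 j / q) ^ 2 - 2 * (r j / ρ) * (q1 j / q)
          + γ * (r j / ρ) ^ 2) - f2 * (q1 j / q - γ * (r j / ρ)) ^ 2) := by
    have a : rt * f0 + ρ * (f1 * (qt / q - γ * (rt / ρ)))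
        = rt * (f0 - γ * f1) + ρ * f1 / q * qt := by field_simp; ring
    rw [a, hrt, hqt]
    have b : (ε * (∑ j, r2 j) - ∑ j, (ρ * w j + u j * r j)) * (f0 - γ * f1)
        + ρ * f1 / q * (ε * (∑ j, q2 j) + ε * D - ∑ j, (u j * q1 j + (q + (γ - 1) * q) * w j))
        = ε * (ρ * f1 / q * D) + ∑ j, ((ε * r2 j - (ρ * w j + u j * r j)) * (f0 - γ * f1)
          + ρ * f1 / q * (ε * q2 j - (u j * q1 j + (q + (γ - 1) * q) * w j))) := by
      have gen : ∀ (A C : Fin d → ℝ) (c1 c2 : ℝ),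
          (ε * (∑ j, r2 j) - ∑ j, A j) * c1 + c2 * (ε * (∑ j, q2 j) + ε * D - ∑ j, C j)
          = ε * (c2 * D) + ∑ j, ((ε * r2 j - A j) * c1 + c2 * (ε * q2 j - C j)) := by
        intro A C c1 c2
        rw [Finset.sum_add_distrib, ← Finset.sum_mul, ← Finset.mul_sum, Finset.sum_sub_distrib,
          Finset.sum_sub_distrib, ← Finset.mul_sum, ← Finset.mul_sum]
        ring
      exact gen _ _ _ _
    rw [b, add_assoc, ← Finset.sum_add_distrib, Finset.mul_sum]
    congr 1
    refine Finset.sum_congr rfl fun j _ => ?_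
    field_simp
    ring
  rw [key]
  have : 0 ≤ ∑ j, (f1 * ((q1 j / q) ^ 2 - 2 * (r j / ρ) * (q1 j / q)
          + γ * (r j / ρ) ^ 2) - f2 * (q1 j / q - γ * (r j / ρ)) ^ 2) :=
    Finset.sum_nonneg fun j _ => hess_nonneg γ f1 f2 _ _ hγ hf1 hf2
  positivity

theorem spd_differentiable {d : ℕ} {g : (Fin d → ℝ) → ℝ} (hg : ContDiff ℝ 2 g) (j : Fin d) :
    Differentiable ℝ (spd g j) := by
  have h : ContDiff ℝ 1 (fderiv ℝ g) := hg.fderiv_right (by norm_num)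
  have h2 := h.differentiable (by norm_num)
  unfold spd
  fun_prop

/-- generalized entropy inequality. For smooth solutions of the
monolithic-regularized ideal MHD system with ideal-gas pressure `p = (γ−1)ρe`,
`∇·B = 0`, `ρ > 0`, `e > 0`, and `f` with `f' > 0`, `f' − γ f'' > 0`, the generalized
entropy `ρ f(s)` satisfies
`∂ₜ(ρ f(s)) + ∇·(uρ f(s) − ερ∇f(s) − ε f(s)∇ρ) ≥ 0` at every point. -/
theorem stmt_18 {d : ℕ} (hd : 1 ≤ d) (γ ε : ℝ) (hγ : 1 < γ) (hε : 0 < ε)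
    (ρ E p : (Fin d → ℝ) → ℝ → ℝ) (m B : (Fin d → ℝ) → ℝ → Fin d → ℝ)
    (f : ℝ → ℝ) (hf : ContDiff ℝ 2 f)
    (hf' : ∀ y : ℝ, 0 < deriv f y)
    (hf'' : ∀ y : ℝ, 0 < deriv f y - γ * deriv (deriv f) y)
    (hρpos : ∀ x t, 0 < ρ x t)
    (hepos : ∀ x t, 0 < specE ρ E m B x t)
    (hp : ∀ x t, p x t = (γ - 1) * ρ x t * specE ρ E m B x t)
    (hρx : ∀ t, ContDiff ℝ 2 fun x => ρ x t) (hρt : ∀ x, ContDiff ℝ 1 fun t => ρ x t)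
    (hmx : ∀ t i, ContDiff ℝ 2 fun x => m x t i) (hmt : ∀ x i, ContDiff ℝ 1 fun t => m x t i)
    (hEx : ∀ t, ContDiff ℝ 2 fun x => E x t) (hEt : ∀ x, ContDiff ℝ 1 fun t => E x t)
    (hBx : ∀ t i, ContDiff ℝ 2 fun x => B x t i) (hBt : ∀ x i, ContDiff ℝ 1 fun t => B x t i)
    (hdivB : ∀ (x : Fin d → ℝ) (t : ℝ), 0 < t → (∑ j, spd (fun y => B y t j) j x) = 0)
    (hmass : ∀ (x : Fin d → ℝ) (t : ℝ), 0 < t →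
      deriv (fun τ => ρ x τ) t + (∑ j, spd (fun y => m y t j) j x)
        = ε * slap (fun y => ρ y t) x)
    (hmom : ∀ (x : Fin d → ℝ) (t : ℝ), 0 < t → ∀ i,
      deriv (fun τ => m x τ i) t
        + (∑ j, spd (fun y => m y t i * (m y t j / ρ y t)
            + (if i = j then p y t else 0) - maxwellT (B y t) i j) j x)
        = ε * slap (fun y => m y t i) x)
    (hener : ∀ (x : Fin d → ℝ) (t : ℝ), 0 < t →
      deriv (fun τ => E x τ) t
        + (∑ j, spd (fun y => (m y t j / ρ y t) * (E y t + p y t)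
            - ∑ k, (m y t k / ρ y t) * maxwellT (B y t) k j) j x)
        = ε * slap (fun y => E y t) x)
    (hind : ∀ (x : Fin d → ℝ) (t : ℝ), 0 < t → ∀ i,
      deriv (fun τ => B x τ i) t
        + (∑ j, spd (fun y => (m y t j / ρ y t) * B y t i - B y t j * (m y t i / ρ y t)) j x)
        = ε * slap (fun y => B y t i) x) :
    ∀ (x : Fin d → ℝ) (t : ℝ), 0 < t →
      deriv (fun τ => ρ x τ * f (sField γ ρ E m B x τ)) t
        + (∑ j, spd (fun y =>
            (m y t j / ρ y t) * (ρ y t * f (sField γ ρ E m B y t))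
            - ε * ρ y t * spd (fun z => f (sField γ ρ E m B z t)) j y
            - ε * f (sField γ ρ E m B y t) * spd (fun z => ρ z t) j y) j x) ≥ 0 := by
  intro x t ht
  -- the internal energy density `q = ρ e`
  set q : (Fin d → ℝ) → ℝ → ℝ := fun y τ =>
    E y τ - ρ y τ * (∑ i, (m y τ i / ρ y τ) ^ 2) / 2 - (∑ i, (B y τ i) ^ 2) / 2 with hqdef
  have hρ0 : ∀ y τ, ρ y τ ≠ 0 := fun y τ => (hρpos y τ).ne'
  have hspec : ∀ y τ, specE ρ E m B y τ = q y τ / ρ y τ := fun y τ => rfl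
  have hqpos : ∀ y τ, 0 < q y τ := fun y τ => by
    have h := hepos y τ
    rw [hspec] at h
    have h2 := mul_pos h (hρpos y τ)
    rwa [div_mul_cancel₀ _ (hρ0 y τ)] at h2
  have hq0 : ∀ y τ, q y τ ≠ 0 := fun y τ => (hqpos y τ).ne'
  have hpq : ∀ y τ, p y τ = (γ - 1) * q y τ := fun y τ => by
    rw [hp, hspec]; field_simp [hρ0 y τ]
  have hs : ∀ y τ, sField γ ρ E m B y τ = Real.log (q y τ) - γ * Real.log (ρ y τ) := fun y τ => by
    unfold sField
    rw [hspec, Real.log_div (hq0 y τ) (hρ0 y τ)]; ring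
  simp only [hs]
  -- first spatial derivatives
  have dρ : ∀ y j, HD (fun z => ρ z t) y (Pi.single j 1) (spd (fun z => ρ z t) j y) := fun y j =>
    HD.of ((hρx t).differentiable (by norm_num) y)
  have dE : ∀ y j, HD (fun z => E z t) y (Pi.single j 1) (spd (fun z => E z t) j y) := fun y j =>
    HD.of ((hEx t).differentiable (by norm_num) y)
  have dm : ∀ y j i, HD (fun z => m z t i) y (Pi.single j 1) (spd (fun z => m z t i) j y) :=
    fun y j i => HD.of ((hmx t i).differentiable (by norm_num) y)
  have dB : ∀ y j i, HD (fun z => B z t i) y (Pi.single j 1) (spd (fun z => B z t i) j y) :=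
    fun y j i => HD.of ((hBx t i).differentiable (by norm_num) y)
  have dρ2 : ∀ y j, HD (spd (fun z => ρ z t) j) y (Pi.single j 1)
      (spd (spd (fun z => ρ z t) j) j y) := fun y j => HD.of (spd_differentiable (hρx t) j y)
  have dE2 : ∀ y j, HD (spd (fun z => E z t) j) y (Pi.single j 1)
      (spd (spd (fun z => E z t) j) j y) := fun y j => HD.of (spd_differentiable (hEx t) j y)
  have dm2 : ∀ y j i, HD (spd (fun z => m z t i) j) y (Pi.single j 1)
      (spd (spd (fun z => m z t i) j) j y) := fun y j i => HD.of (spd_differentiable (hmx t i) j y)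
  have dB2 : ∀ y j i, HD (spd (fun z => B z t i) j) y (Pi.single j 1)
      (spd (spd (fun z => B z t i) j) j y) := fun y j i => HD.of (spd_differentiable (hBx t i) j y)
  -- the velocity
  set w : Fin d → Fin d → ℝ := fun j i =>
    (spd (fun z => m z t i) j x - m x t i / ρ x t * spd (fun z => ρ z t) j x) / ρ x t with hw
  have du : ∀ j i, HD (fun z => m z t i / ρ z t) x (Pi.single j 1) (w j i) := fun j i =>
    (dm x j i).div (dρ x j) (hρ0 x t)
  -- derivatives of `q`
  set Q1 : Fin d → (Fin d → ℝ) → ℝ := fun j y => spd (fun z => E z t) j y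
    - ∑ i, m y t i / ρ y t * spd (fun z => m z t i) j y
    + (∑ i, (m y t i / ρ y t) ^ 2) / 2 * spd (fun z => ρ z t) j y
    - ∑ i, B y t i * spd (fun z => B z t i) j y with hQ1
  have dq : ∀ y j, HD (fun z => q z t) y (Pi.single j 1) (Q1 j y) := fun y j =>
    HD.q (dρ y j) (dE y j) (dm y j) (dB y j) (hρ0 y t)
  set q2 : Fin d → ℝ := fun j => spd (spd (fun z => E z t) j) j x
    - ∑ i, m x t i / ρ x t * spd (spd (fun z => m z t i) j) j x
    + (∑ i, (m x t i / ρ x t) ^ 2) / 2 * spd (spd (fun z => ρ z t) j) j x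
    - ∑ i, B x t i * spd (spd (fun z => B z t i) j) j x
    - ρ x t * (∑ i, (w j i) ^ 2) - ∑ i, (spd (fun z => B z t i) j x) ^ 2 with hq2
  have dq2 : ∀ j, HD (Q1 j) x (Pi.single j 1) (q2 j) := fun j =>
    HD.q2 (m1 := fun y i => spd (fun z => m z t i) j y) (B1 := fun y i => spd (fun z => B z t i) j y)
      (dρ x j) (dm x j) (dB x j) (hρ0 x t) (dρ2 x j) (dE2 x j) (dm2 x j) (dB2 x j)
  have dp : ∀ j, HD (fun z => p z t) x (Pi.single j 1) ((γ - 1) * Q1 j x) := fun j => by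
    simp only [hpq]
    exact ((HD.const (γ - 1)).mul (dq x j)).cast (by ring)
  -- time derivatives
  have tρ : HD (fun τ => ρ x τ) t (1 : ℝ) (deriv (fun τ => ρ x τ) t) :=
    ⟨(hρt x).differentiable (by norm_num) t, fderiv_apply_one_eq_deriv⟩
  have tE : HD (fun τ => E x τ) t (1 : ℝ) (deriv (fun τ => E x τ) t) :=
    ⟨(hEt x).differentiable (by norm_num) t, fderiv_apply_one_eq_deriv⟩
  have tm : ∀ i, HD (fun τ => m x τ i) t (1 : ℝ) (deriv (fun τ => m x τ i) t) := fun i =>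
    ⟨(hmt x i).differentiable (by norm_num) t, fderiv_apply_one_eq_deriv⟩
  have tB : ∀ i, HD (fun τ => B x τ i) t (1 : ℝ) (deriv (fun τ => B x τ i) t) := fun i =>
    ⟨(hBt x i).differentiable (by norm_num) t, fderiv_apply_one_eq_deriv⟩
  have tq := HD.q tρ tE tm tB (hρ0 x t)
  set qt : ℝ := deriv (fun τ => E x τ) t - ∑ i, m x t i / ρ x t * deriv (fun τ => m x τ i) t
    + (∑ i, (m x t i / ρ x t) ^ 2) / 2 * deriv (fun τ => ρ x τ) t
    - ∑ i, B x t i * deriv (fun τ => B x τ i) t with hqt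
  -- derivatives of `f` and `s`
  have hfd : ∀ y, HasDerivAt f (deriv f y) y := fun y =>
    (hf.differentiable (by norm_num) y).hasDerivAt
  have hf1 : ContDiff ℝ 1 (deriv f) := by
    have : ContDiff ℝ (1 + 1) f := by norm_num; exact hf
    exact (contDiff_succ_iff_deriv.1 this).2.2
  have hfd2 : ∀ y, HasDerivAt (deriv f) (deriv (deriv f) y) y := fun y =>
    (hf1.differentiable (by norm_num) y).hasDerivAt
  have ds : ∀ y j, HD (fun z => Real.log (q z t) - γ * Real.log (ρ z t)) y (Pi.single j 1)
      (Q1 j y / q y t - γ * (spd (fun z => ρ z t) j y / ρ y t)) := fun y j =>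
    HD.s (dρ y j) (dq y j) (hρ0 y t) (hq0 y t)
  have ts : HD (fun τ => Real.log (q x τ) - γ * Real.log (ρ x τ)) t (1 : ℝ)
      (qt / q x t - γ * (deriv (fun τ => ρ x τ) t / ρ x t)) :=
    HD.s tρ tq (hρ0 x t) (hq0 x t)
  have dfs : ∀ y j, HD (fun z => f (Real.log (q z t) - γ * Real.log (ρ z t))) y (Pi.single j 1)
      (deriv f (Real.log (q y t) - γ * Real.log (ρ y t)) *
        (Q1 j y / q y t - γ * (spd (fun z => ρ z t) j y / ρ y t))) := fun y j =>
    HD.comp (hfd _) (ds y j)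
  have tF := (tρ.mul (HD.comp (hfd _) ts)).2
  rw [fderiv_apply_one_eq_deriv] at tF
  -- the spatial flux
  have he : ∀ j, (fun y =>
            (m y t j / ρ y t) * (ρ y t * f (Real.log (q y t) - γ * Real.log (ρ y t)))
            - ε * ρ y t * spd (fun z => f (Real.log (q z t) - γ * Real.log (ρ z t))) j y
            - ε * f (Real.log (q y t) - γ * Real.log (ρ y t)) * spd (fun z => ρ z t) j y)
          = fun y => (m y t j / ρ y t) * (ρ y t * f (Real.log (q y t) - γ * Real.log (ρ y t)))
            - ε * (ρ y t * (deriv f (Real.log (q y t) - γ * Real.log (ρ y t)) *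
        (Q1 j y / q y t - γ * (spd (fun z => ρ z t) j y / ρ y t))))
            - ε * (f (Real.log (q y t) - γ * Real.log (ρ y t)) * spd (fun z => ρ z t) j y) := by
    intro j
    funext y
    have h1 : spd (fun z => f (Real.log (q z t) - γ * Real.log (ρ z t))) j y = _ := (dfs y j).2
    rw [h1]; ring
  have hflux := fun j => (congrArg (fun g => spd g j x) (he j)).trans
    ((((du j j).mul ((dρ x j).mul (dfs x j))).sub
        ((HD.const ε).mul ((dρ x j).mul ((HD.comp (hfd2 _) (ds x j)).mul
          (((dq2 j).div (dq x j) (hq0 x t)).sub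
            ((HD.const γ).mul ((dρ2 x j).div (dρ x j) (hρ0 x t)))))))).sub
        ((HD.const ε).mul ((dfs x j).mul (dρ2 x j)))).2
  -- the conservation laws, expanded
  have hμ : ∀ j k, spd (fun z => m z t k) j x
      = ρ x t * w j k + m x t k / ρ x t * spd (fun z => ρ z t) j x := fun j k => by
    simp only [hw]; field_simp [hρ0 x t]; ring
  have dT : ∀ j k, DifferentiableAt ℝ (fun y => maxwellT (B y t) k j) x := fun j k => by
    have hb : ∀ i, DifferentiableAt ℝ (fun y => B y t i) x := fun i => (dB x j i).1
    unfold maxwellT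
    split_ifs <;> fun_prop
  have hMF : ∀ j k, spd (fun y => m y t k * (m y t j / ρ y t)
            + (if k = j then p y t else 0) - maxwellT (B y t) k j) j x
      = spd (fun z => m z t k) j x * (m x t j / ρ x t) + ρ x t * (m x t k / ρ x t) * w j j
        + (if k = j then (γ - 1) * Q1 j x else 0) - spd (fun y => maxwellT (B y t) k j) j x :=
    fun j k => by
      have hite : HD (fun y => if k = j then p y t else 0) x (Pi.single j 1)
          (if k = j then (γ - 1) * Q1 j x else 0) := by
        split_ifs
        · exact dp j
        · exact HD.const 0
      have := ((((dm x j k).mul (du j j)).add hite).sub (HD.of (dT j k))).2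
      refine Eq.trans this ?_
      rw [mul_div_cancel₀ _ (hρ0 x t)]
      rfl
  have hEF : ∀ j, spd (fun y => (m y t j / ρ y t) * (E y t + p y t)
            - ∑ k, (m y t k / ρ y t) * maxwellT (B y t) k j) j x
      = w j j * (E x t + p x t) + m x t j / ρ x t * (spd (fun z => E z t) j x + (γ - 1) * Q1 j x)
        - ∑ k, (w j k * maxwellT (B x t) k j
          + m x t k / ρ x t * spd (fun y => maxwellT (B y t) k j) j x) := fun j =>
    (((du j j).mul ((dE x j).add (dp j))).sub
      (HD.sum fun k => (du j k).mul (HD.of (dT j k)))).2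
  have hIF : ∀ j k, spd (fun y => (m y t j / ρ y t) * B y t k - B y t j * (m y t k / ρ y t)) j x
      = (w j j * B x t k + m x t j / ρ x t * spd (fun z => B z t k) j x)
        - (spd (fun z => B z t j) j x * (m x t k / ρ x t) + B x t j * w j k) := fun j k =>
    (((du j j).mul (dB x j k)).sub ((dB x j j).mul (du j k))).2
  have hE0 : E x t = q x t + ρ x t * (∑ k, (m x t k / ρ x t) ^ 2) / 2
      + (∑ k, B x t k ^ 2) / 2 := by simp only [hqdef]; ring
  have halg := fun j => alg_flux (ρ x t) (spd (fun z => ρ z t) j x) (E x t)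
    (spd (fun z => E z t) j x) (q x t) (Q1 j x) (p x t) ((γ - 1) * Q1 j x)
    (fun k => m x t k / ρ x t) (w j) (B x t) (fun k => spd (fun z => B z t k) j x)
    (fun k => spd (fun z => m z t k) j x) (fun k => spd (fun y => maxwellT (B y t) k j) j x)
    _ _ j (hμ j) hE0 rfl (hMF j) (hIF j)
  have hmass' := hmass x t ht
  have hener' := hener x t ht
  have hmom' := hmom x t ht
  have hind' := hind x t ht
  have hdiv' := hdivB x t ht
  unfold slap at hmass' hener' hmom' hind'
  have hrt : deriv (fun τ => ρ x τ) t = ε * (∑ j, spd (spd (fun z => ρ z t) j) j x)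
      - ∑ j, (ρ x t * w j j + m x t j / ρ x t * spd (fun z => ρ z t) j x) := by
    have : ∑ j, (ρ x t * w j j + m x t j / ρ x t * spd (fun z => ρ z t) j x)
        = ∑ j, spd (fun z => m z t j) j x := Finset.sum_congr rfl fun j _ => (hμ j j).symm
    rw [this]; linarith
  set D : ℝ := ∑ j, (ρ x t * (∑ i, (w j i) ^ 2) + ∑ i, (spd (fun z => B z t i) j x) ^ 2) with hD
  have hD0 : 0 ≤ D := Finset.sum_nonneg fun j _ => add_nonneg
    (mul_nonneg (hρpos x t).le (Finset.sum_nonneg fun i _ => sq_nonneg _))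
    (Finset.sum_nonneg fun i _ => sq_nonneg _)
  have hqt' : qt = ε * (∑ j, q2 j) + ε * D - ∑ j, (m x t j / ρ x t * Q1 j x
      + (q x t + (γ - 1) * q x t) * w j j) := by
    have hsum := Finset.sum_congr (rfl : (Finset.univ : Finset (Fin d)) = Finset.univ)
      fun j _ => halg j
    have hR : ∑ j, (m x t j / ρ x t * Q1 j x + (q x t + p x t) * w j j
        + (∑ k, m x t k / ρ x t * B x t k) * spd (fun z => B z t j) j x)
        = ∑ j, (m x t j / ρ x t * Q1 j x + (q x t + (γ - 1) * q x t) * w j j) := by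
      rw [Finset.sum_add_distrib, ← Finset.mul_sum, hdiv', mul_zero, add_zero, hpq]
    have hqD : ε * (∑ j, q2 j) + ε * D = ε * (∑ j, spd (spd (fun z => E z t) j) j x)
        - ∑ i, m x t i / ρ x t * (ε * ∑ j, spd (spd (fun z => m z t i) j) j x)
        + (∑ i, (m x t i / ρ x t) ^ 2) / 2 * (ε * ∑ j, spd (spd (fun z => ρ z t) j) j x)
        - ∑ i, B x t i * (ε * ∑ j, spd (spd (fun z => B z t i) j) j x) := by
      have c1 : ∑ i, m x t i / ρ x t * (ε * ∑ j, spd (spd (fun z => m z t i) j) j x)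
          = ε * ∑ j, ∑ i, m x t i / ρ x t * spd (spd (fun z => m z t i) j) j x := by
        rw [Finset.sum_comm]
        simp only [Finset.mul_sum]
        exact Finset.sum_congr rfl fun i _ => Finset.sum_congr rfl fun j _ => by ring
      have c2 : ∑ i, B x t i * (ε * ∑ j, spd (spd (fun z => B z t i) j) j x)
          = ε * ∑ j, ∑ i, B x t i * spd (spd (fun z => B z t i) j) j x := by
        rw [Finset.sum_comm]
        simp only [Finset.mul_sum]
        exact Finset.sum_congr rfl fun i _ => Finset.sum_congr rfl fun j _ => by ring
      rw [c1, c2, hD]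
      simp only [hq2, Finset.sum_add_distrib, Finset.sum_sub_distrib, ← Finset.mul_sum]
      ring
    rw [hqD, ← hR, ← hsum, ← hener', ← hmass']
    simp only [← hmom', ← hind', ← hEF]
    have c1 : ∀ MF : Fin d → Fin d → ℝ, ∀ a : Fin d → ℝ,
        ∑ j, ∑ k, a k * MF j k = ∑ k, a k * ∑ j, MF j k := by
      intro MF a
      rw [Finset.sum_comm]
      simp only [Finset.mul_sum]
    simp only [Finset.sum_add_distrib, Finset.sum_sub_distrib, ← Finset.mul_sum, mul_add, c1]
    rw [hqt]
    ring
  have hfin := alg_final γ ε (ρ x t) (q x t) (deriv (fun τ => ρ x τ) t) qt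
    (f (Real.log (q x t) - γ * Real.log (ρ x t)))
    (deriv f (Real.log (q x t) - γ * Real.log (ρ x t)))
    (deriv (deriv f) (Real.log (q x t) - γ * Real.log (ρ x t))) D
    (fun j => m x t j / ρ x t) (fun j => w j j) (fun j => spd (fun z => ρ z t) j x)
    (fun j => spd (spd (fun z => ρ z t) j) j x) (fun j => Q1 j x) q2
    hγ hε (hρpos x t) (hqpos x t) (hf' _) (hf'' _) hD0 hrt hqt'
  rw [tF, Finset.sum_congr rfl fun j _ => hflux j]
  refine le_of_le_of_eq hfin ?_
  congr 1
  refine Finset.sum_congr rfl fun j _ => ?_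
  ring
end
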